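/- Lemma 3 (conditional resolvability when the eavesdropper knows Sender 1's codeword): With the random codebook triple (C, C1, C2) generated as in Lemma 1 and the same single-letter joint law, if R2 > I(U2;Y|U,U1,S), then the expectation over the random codebooks of the average, over indices (l, l1), of D( P^n_{YS|U(l),U1(l,l1),C2} || P^n_{YS|U U1}(.|U(l),U1(l,l1)) ) converges to 0 as n tends to infinity. -/

import Mathlib

/-!
The divergence is bounded by an exponentially decaying quantity, without typical sets.

Every summand depends only on one pair of codewords `(U(l), U1(l,l1))` and on the `l`-th codebook of
Sender 2, so by symmetry (`expected_average_eq`) the expectation equals that of a single pair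
`(u, u1)` with an independent i.i.d. codebook of `m` words. For such a codebook, Jensen's inequality
conditionally on one codeword (`sum_log_ratio_le`) bounds the expected divergence by the expectation
of `logb 2 (1 + W / (m Q))`, where `W` is the block channel and `Q` the ideal output law. Since
`log (1 + x) ≤ x ^ ρ / ρ` for `0 < ρ ≤ 1`, this is at most
`(ρ log 2)⁻¹ * m ^ (-ρ) * E[(W / Q) ^ ρ]` (`expected_KL_le`).

The moment tensorizes (`block_moment`), so with `m ≥ 2 ^ (n R2)` the bound is a constant times the
`n`-th power of `E[r ^ ρ] * 2 ^ (-ρ R2)`, with `r` the single-letter likelihood ratio. At `ρ = 0` this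
number is `1` and its derivative is `(I(U2;Y|U,U1,S) - R2) * log 2 < 0` (`cMI_eq_sum`,
`exists_exponent`), hence it is less than `1` for some small `ρ > 0`. Nonnegativity of the expected
divergence (`expected_KL_nonneg`) completes the squeeze.
-/

open scoped BigOperators

noncomputable section

namespace Paper

/-- `p` is a probability mass function on the finite type `α`. -/
def IsPmf {α : Type*} [Fintype α] (p : α → ℝ) : Prop :=
  (∀ a, 0 ≤ p a) ∧ ∑ a, p a = 1

/-- `k` is a conditional pmf (a channel / stochastic kernel). -/
def IsKernel {α β : Type*} [Fintype β] (k : α → β → ℝ) : Prop :=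
  ∀ a, IsPmf (k a)

/-- Shannon entropy (base 2) of a mass function on a finite type. -/
def ent {α : Type*} [Fintype α] (p : α → ℝ) : ℝ :=
  -∑ a, p a * Real.logb 2 (p a)

/-- Law (pushforward) of the random variable `X` under the mass function `p`. -/
def law {Ω α : Type*} [Fintype Ω] [DecidableEq α] (p : Ω → ℝ) (X : Ω → α) :
    α → ℝ := fun a => ∑ ω, if X ω = a then p ω else 0

/-- Entropy `H(X)` of a random variable `X`. -/
def H {Ω α : Type*} [Fintype Ω] [Fintype α] [DecidableEq α] (p : Ω → ℝ)
    (X : Ω → α) : ℝ := ent (law p X)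

/-- Conditional entropy `H(X|Y)`. -/
def Hc {Ω α β : Type*} [Fintype Ω] [Fintype α] [Fintype β] [DecidableEq α]
    [DecidableEq β] (p : Ω → ℝ) (X : Ω → α) (Y : Ω → β) : ℝ :=
  H p (fun ω => (X ω, Y ω)) - H p Y

/-- Mutual information `I(X;Y)`. -/
def MI {Ω α β : Type*} [Fintype Ω] [Fintype α] [Fintype β] [DecidableEq α]
    [DecidableEq β] (p : Ω → ℝ) (X : Ω → α) (Y : Ω → β) : ℝ :=
  H p X + H p Y - H p (fun ω => (X ω, Y ω))

/-- Conditional mutual information `I(X;Y|Z)`. -/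
def cMI {Ω α β γ : Type*} [Fintype Ω] [Fintype α] [Fintype β] [Fintype γ]
    [DecidableEq α] [DecidableEq β] [DecidableEq γ] (p : Ω → ℝ) (X : Ω → α)
    (Y : Ω → β) (Z : Ω → γ) : ℝ :=
  Hc p X Z - Hc p X (fun ω => (Y ω, Z ω))

/-- Kullback–Leibler divergence (base 2). -/
def KL {α : Type*} [Fintype α] (p q : α → ℝ) : ℝ :=
  ∑ a, p a * Real.logb 2 (p a / q a)

/-- Binary entropy function. -/
def hb (x : ℝ) : ℝ := -(x * Real.logb 2 x) - (1 - x) * Real.logb 2 (1 - x)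

/-- A (message-indexed) encoder is causal: its `j`-th output symbol depends only on the
first `j` state symbols. -/
def Causal {M A B : Type*} {n : ℕ} (e : M → (Fin n → A) → Fin n → B) : Prop :=
  ∀ m s s' j, (∀ i, i ≤ j → s i = s' i) → e m s j = e m s' j

/-- A strictly causal encoder: its `j`-th output symbol depends only on the state symbols
strictly before `j`. -/
def StrictlyCausal {M A B : Type*} {n : ℕ} (e : M → (Fin n → A) → Fin n → B) : Prop :=
  ∀ m s s' j, (∀ i, i < j → s i = s' i) → e m s j = e m s' j

/-- Sample space carrying the single-letter random variables `(U,U1,U2,S,Y)`. -/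
abbrev O5Y (U U1 U2 AS AY : Type) : Type := U × U1 × U2 × AS × AY

namespace O5Y
variable {U U1 U2 AS AY : Type}
def u (ω : O5Y U U1 U2 AS AY) : U := ω.1
def u1 (ω : O5Y U U1 U2 AS AY) : U1 := ω.2.1
def u2 (ω : O5Y U U1 U2 AS AY) : U2 := ω.2.2.1
def s (ω : O5Y U U1 U2 AS AY) : AS := ω.2.2.2.1
def y (ω : O5Y U U1 U2 AS AY) : AY := ω.2.2.2.2
end O5Y

variable {U U1 U2 AS AY : Type} [Fintype U] [Fintype U1] [Fintype U2] [Fintype AS]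
  [Fintype AY] [DecidableEq U] [DecidableEq U1] [DecidableEq U2] [DecidableEq AS]
  [DecidableEq AY]

/-- The single-letter joint law `P_S P_U P_{U1|U} P_{U2|U} P_{Y|UU1U2S}`. -/
def slJointY (PU : U → ℝ) (PU1 : U → U1 → ℝ) (PU2 : U → U2 → ℝ) (PS : AS → ℝ)
    (PY : U → U1 → U2 → AS → AY → ℝ) : O5Y U U1 U2 AS AY → ℝ :=
  fun ω => PS ω.s * PU ω.u * PU1 ω.u ω.u1 * PU2 ω.u ω.u2 * PY ω.u ω.u1 ω.u2 ω.s ω.y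

/-- The probability of drawing the superposition codebook realization `(c, c1, c2)`. -/
def cbProb (PU : U → ℝ) (PU1 : U → U1 → ℝ) (PU2 : U → U2 → ℝ) {m0 m1 m2 n : ℕ}
    (c : Fin m0 → Fin n → U) (c1 : Fin m0 → Fin m1 → Fin n → U1)
    (c2 : Fin m0 → Fin m2 → Fin n → U2) : ℝ :=
  (∏ l, ∏ i, PU (c l i)) * (∏ l, ∏ l1, ∏ i, PU1 (c l i) (c1 l l1 i)) *
    ∏ l, ∏ l2, ∏ i, PU2 (c l i) (c2 l l2 i)

/-- The distribution `P^n_{YS|U(l),U1(l,l1),C2}` induced by the codebook realization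
given the indices `(l, l1)` (uniform index of Sender 2's codeword). -/
def inducedYS (PS : AS → ℝ) (PY : U → U1 → U2 → AS → AY → ℝ) {m0 m1 m2 n : ℕ}
    (c : Fin m0 → Fin n → U) (c1 : Fin m0 → Fin m1 → Fin n → U1)
    (c2 : Fin m0 → Fin m2 → Fin n → U2) (l : Fin m0) (l1 : Fin m1) :
    (Fin n → AY) × (Fin n → AS) → ℝ :=
  fun ys => ((m2 : ℝ))⁻¹ * ∑ l2,
    ∏ i, PY (c l i) (c1 l l1 i) (c2 l l2 i) (ys.2 i) (ys.1 i) * PS (ys.2 i)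

/-- The ideal distribution `P^n_{YS|UU1}(· | u, u1)`. -/
def idealYS (PU2 : U → U2 → ℝ) (PS : AS → ℝ) (PY : U → U1 → U2 → AS → AY → ℝ)
    {n : ℕ} (u : Fin n → U) (u1 : Fin n → U1) : (Fin n → AY) × (Fin n → AS) → ℝ :=
  fun ys => ∑ u2 : Fin n → U2, (∏ i, PU2 (u i) (u2 i)) *
    ∏ i, PY (u i) (u1 i) (u2 i) (ys.2 i) (ys.1 i) * PS (ys.2 i)

/-! ### Sums over product spaces -/

section Marginals

variable {ι X : Type*} [Fintype ι] [DecidableEq ι] [Fintype X]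

lemma sum_prod_mul_prod (f g : ι → X → ℝ) :
    ∑ x : ι → X, (∏ i, f i (x i)) * ∏ i, g i (x i) = ∏ i, ∑ a, f i a * g i a := by
  rw [Fintype.prod_sum]
  simp only [Finset.prod_mul_distrib]

lemma sum_prod_eq_one (p : ι → X → ℝ) (hp : ∀ i, ∑ a, p i a = 1) :
    ∑ x : ι → X, ∏ i, p i (x i) = 1 := by
  rw [← Fintype.prod_sum]
  simp [hp]

/-- The marginal at coordinate `j` of a product of unit-mass functions. -/
lemma sum_prod_mul_apply (p : ι → X → ℝ) (hp : ∀ i, ∑ a, p i a = 1) (j : ι) (g : X → ℝ) :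
    ∑ x : ι → X, (∏ i, p i (x i)) * g (x j) = ∑ a, p j a * g a := by
  have h := sum_prod_mul_prod p (fun i a => if i = j then g a else 1)
  have e : ∀ x : ι → X, (∏ i, if i = j then g (x i) else 1) = g (x j) := by
    intro x
    rw [Finset.prod_ite_eq' Finset.univ j (fun i => g (x i))]
    simp
  simp only [e] at h
  rw [h, Finset.prod_eq_single j]
  · simp
  · intro i _ hij
    simp [hij, hp]
  · simp

/-- Distinct coordinates are independent under a product of unit-mass functions. -/
lemma sum_prod_mul_apply_apply (p : ι → X → ℝ) (hp : ∀ i, ∑ a, p i a = 1) {j k : ι}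
    (hjk : j ≠ k) (g h : X → ℝ) :
    ∑ x : ι → X, (∏ i, p i (x i)) * (g (x j) * h (x k)) =
      (∑ a, p j a * g a) * ∑ a, p k a * h a := by
  have H := sum_prod_mul_prod p
    (fun i a => (if i = j then g a else 1) * (if i = k then h a else 1))
  have e : ∀ x : ι → X, (∏ i, (if i = j then g (x i) else 1) * (if i = k then h (x i) else 1))
      = g (x j) * h (x k) := by
    intro x
    rw [Finset.prod_mul_distrib, Finset.prod_ite_eq' Finset.univ j (fun i => g (x i)),
      Finset.prod_ite_eq' Finset.univ k (fun i => h (x i))]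
    simp
  simp only [e] at H
  rw [H]
  have e2 : ∀ i, ∑ a, p i a * ((if i = j then g a else 1) * (if i = k then h a else 1)) =
      (if i = j then ∑ a, p j a * g a else 1) * (if i = k then ∑ a, p k a * h a else 1) := by
    intro i
    by_cases h1 : i = j
    · subst h1
      simp [hjk]
    · by_cases h2 : i = k
      · subst h2
        simp [h1]
      · simp [h1, h2, hp]
  simp only [e2]
  rw [Finset.prod_mul_distrib, Finset.prod_ite_eq' Finset.univ j,
    Finset.prod_ite_eq' Finset.univ k]
  simp

end Marginals

/-! ### One-shot soft covering -/

/-- Follows from `(1 + x) ^ ρ ≤ 1 + x ^ ρ` and `log z ≤ z - 1`. -/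
lemma log_one_add_le {x ρ : ℝ} (hx : 0 ≤ x) (hρ : 0 < ρ) (hρ1 : ρ ≤ 1) :
    Real.log (1 + x) ≤ x ^ ρ / ρ := by
  rw [le_div_iff₀ hρ, mul_comm, ← Real.log_rpow (by linarith)]
  have h1 := Real.rpow_add_le_add_rpow (zero_le_one) hx hρ.le hρ1
  have h2 := Real.log_le_sub_one_of_pos (Real.rpow_pos_of_pos (by linarith : 0 < 1 + x) ρ)
  rw [Real.one_rpow] at h1
  linarith

section OneShot

variable {V T : Type*} [Fintype V] [Fintype T]

/-- Conditionally on the `j`-th codeword, the other `m - 1` codewords contribute at most `1` to the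
expected likelihood ratio, so Jensen's inequality for the logarithm (used in tangent-line form at
`1 + w a / (m * q)`) bounds the expected log-ratio. -/
lemma sum_log_ratio_le {m : ℕ} (p : V → ℝ) (hp : IsPmf p) (w : V → ℝ) (hw : ∀ a, 0 ≤ w a)
    (j : Fin m) :
    ∑ v : Fin m → V, (∏ i, p (v i)) *
        (w (v j) * Real.log ((m : ℝ)⁻¹ * (∑ k, w (v k)) / ∑ a, p a * w a)) ≤
      ∑ a, p a * (w a * Real.log (1 + w a / (m * ∑ b, p b * w b))) := by
  have hm : 0 < (m : ℝ) := by exact_mod_cast j.pos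
  set q := ∑ a, p a * w a with hq
  have hq0 : 0 ≤ q := Finset.sum_nonneg fun a _ => mul_nonneg (hp.1 a) (hw a)
  rcases hq0.eq_or_lt with h0 | hqpos
  · simp [← h0]
  set x0 : V → ℝ := fun a => 1 + w a / (m * q) with hx0
  have hx0pos : ∀ a, 0 < x0 a := fun a => by
    have := hw a
    positivity
  set h : V → ℝ := fun a => w a / x0 a with hh
  have hh0 : ∀ a, 0 ≤ h a := fun a => div_nonneg (hw a) (hx0pos a).le
  have hP : ∀ v : Fin m → V, 0 ≤ ∏ i, p (v i) := fun v => Finset.prod_nonneg fun i _ => hp.1 _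
  have key : ∀ v : Fin m → V,
      w (v j) * Real.log ((m : ℝ)⁻¹ * (∑ k, w (v k)) / q) ≤
        (w (v j) * Real.log (x0 (v j)) - w (v j)) + ∑ k, (m * q)⁻¹ * (h (v j) * w (v k)) := by
    intro v
    have e : ∑ k, (m * q)⁻¹ * (h (v j) * w (v k)) =
        w (v j) * (((m : ℝ)⁻¹ * (∑ k, w (v k)) / q) / x0 (v j)) := by
      rw [← Finset.mul_sum, ← Finset.mul_sum]
      simp only [hh]
      have := (hx0pos (v j)).ne'
      field_simp
    rw [e]
    rcases (hw (v j)).eq_or_lt with h1 | h1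
    · simp [← h1]
    have hs : 0 < ∑ k, w (v k) :=
      lt_of_lt_of_le h1 (Finset.single_le_sum (f := fun k => w (v k)) (fun k _ => hw _)
        (Finset.mem_univ j))
    have hx : 0 < (m : ℝ)⁻¹ * (∑ k, w (v k)) / q := by positivity
    have := Real.log_le_sub_one_of_pos (div_pos hx (hx0pos (v j)))
    rw [Real.log_div hx.ne' (hx0pos _).ne'] at this
    nlinarith
  have hpm : ∀ i : Fin m, ∑ a, p a = 1 := fun _ => hp.2
  calc _ ≤ ∑ v : Fin m → V, (∏ i, p (v i)) *
        ((w (v j) * Real.log (x0 (v j)) - w (v j)) + ∑ k, (m * q)⁻¹ * (h (v j) * w (v k))) :=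
        Finset.sum_le_sum fun v _ => mul_le_mul_of_nonneg_left (key v) (hP v)
    _ = ∑ a, p a * (w a * Real.log (x0 a) - w a) +
        ∑ k, (m * q)⁻¹ * ∑ v : Fin m → V, (∏ i, p (v i)) * (h (v j) * w (v k)) := by
        rw [← sum_prod_mul_apply (fun _ : Fin m => p) hpm j
          (fun a => w a * Real.log (x0 a) - w a)]
        simp only [mul_add, Finset.sum_add_distrib]
        congr 1
        simp only [Finset.mul_sum]
        rw [Finset.sum_comm]
        refine Finset.sum_congr rfl fun k _ => Finset.sum_congr rfl fun v _ => by ring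
    _ ≤ ∑ a, p a * (w a * Real.log (x0 a) - w a) +
        ∑ k, ((m : ℝ)⁻¹ * (∑ a, p a * h a) +
          if k = j then ∑ a, p a * (h a * (w a / (m * q))) else 0) := by
        gcongr with k _
        by_cases hk : k = j
        · subst hk
          rw [sum_prod_mul_apply (fun _ : Fin m => p) hpm k (fun a => h a * w a), if_pos rfl]
          have h1 : 0 ≤ (m : ℝ)⁻¹ * ∑ a, p a * h a :=
            mul_nonneg (by positivity)
              (Finset.sum_nonneg fun a _ => mul_nonneg (hp.1 a) (hh0 a))
          have h2 : (m * q)⁻¹ * ∑ a, p a * (h a * w a) = ∑ a, p a * (h a * (w a / (m * q))) := by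
            rw [Finset.mul_sum]
            refine Finset.sum_congr rfl fun a _ => ?_
            rw [div_eq_mul_inv]
            ring
          linarith
        · rw [sum_prod_mul_apply_apply (fun _ : Fin m => p) hpm (Ne.symm hk) h w, if_neg hk, ← hq,
            add_zero]
          apply le_of_eq
          field_simp
    _ = _ := by
        rw [Finset.sum_add_distrib, Finset.sum_ite_eq' Finset.univ j]
        simp only [Finset.mem_univ, if_true, Finset.sum_const, Finset.card_univ, Fintype.card_fin,
          nsmul_eq_mul]
        rw [← mul_assoc, mul_inv_cancel₀ hm.ne', one_mul, ← Finset.sum_add_distrib,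
          ← Finset.sum_add_distrib]
        refine Finset.sum_congr rfl fun a _ => ?_
        have : h a * x0 a = w a := div_mul_cancel₀ _ (hx0pos a).ne'
        have e : h a + h a * (w a / (m * q)) = w a := by
          rw [hx0] at this
          linear_combination this
        linear_combination p a * e

/-- The random-codebook bound for a channel `W` with input law `p`: the expected divergence between
the output law of an `m`-word i.i.d. codebook and the ideal output law is controlled by
`m ^ (-ρ)` times the `ρ`-th moment of the likelihood ratio. -/
lemma expected_KL_le {m : ℕ} (hm : 0 < m) (p : V → ℝ) (hp : IsPmf p) (W : V → T → ℝ)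
    (hW : IsKernel W) {ρ : ℝ} (hρ : 0 < ρ) (hρ1 : ρ ≤ 1) :
    ∑ v : Fin m → V, (∏ i, p (v i)) *
        KL (fun t => (m : ℝ)⁻¹ * ∑ k, W (v k) t) (fun t => ∑ a, p a * W a t) ≤
      (ρ * Real.log 2)⁻¹ * (m : ℝ) ^ (-ρ) *
        ∑ a, p a * ∑ t, W a t * (W a t / ∑ b, p b * W b t) ^ ρ := by
  have hm' : 0 < (m : ℝ) := by exact_mod_cast hm
  have hl2 : 0 < Real.log 2 := Real.log_pos (by norm_num)
  calc _ = ∑ t, ∑ j : Fin m, (m : ℝ)⁻¹ * (Real.log 2)⁻¹ * ∑ v : Fin m → V, (∏ i, p (v i)) *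
        (W (v j) t * Real.log ((m : ℝ)⁻¹ * (∑ k, W (v k) t) / ∑ a, p a * W a t)) := by
        simp only [KL, Finset.mul_sum, Finset.sum_mul, Real.logb]
        rw [Finset.sum_comm]
        refine Finset.sum_congr rfl fun t _ => ?_
        rw [Finset.sum_comm]
        refine Finset.sum_congr rfl fun j _ => Finset.sum_congr rfl fun v _ => ?_
        rw [div_eq_mul_inv _ (Real.log 2)]
        ring
    _ ≤ ∑ t, ∑ j : Fin m, (m : ℝ)⁻¹ * (Real.log 2)⁻¹ *
        ∑ a, p a * (W a t * ((m : ℝ) ^ (-ρ) * (W a t / ∑ b, p b * W b t) ^ ρ / ρ)) := by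
        gcongr with t _ j _
        refine (sum_log_ratio_le p hp (fun a => W a t) (fun a => (hW a).1 t) j).trans ?_
        refine Finset.sum_le_sum fun a _ => mul_le_mul_of_nonneg_left
          (mul_le_mul_of_nonneg_left ?_ ((hW a).1 t)) (hp.1 a)
        have hq : 0 ≤ ∑ b, p b * W b t :=
          Finset.sum_nonneg fun b _ => mul_nonneg (hp.1 b) ((hW b).1 t)
        have hwa := (hW a).1 t
        refine (log_one_add_le (by positivity) hρ hρ1).trans (le_of_eq ?_)
        congr 1
        rw [mul_comm (m : ℝ), ← div_div, Real.div_rpow (by positivity) hm'.le,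
          Real.rpow_neg hm'.le, div_eq_mul_inv, mul_comm]
    _ = _ := by
        simp only [Finset.sum_const, Finset.card_univ, Fintype.card_fin, nsmul_eq_mul]
        simp only [Finset.mul_sum]
        rw [Finset.sum_comm]
        refine Finset.sum_congr rfl fun a _ => Finset.sum_congr rfl fun t _ => ?_
        field_simp

/-- Gibbs' inequality for finite mass functions of equal total mass, under absolute continuity. -/
lemma KL_nonneg (p q : T → ℝ) (hp : ∀ t, 0 ≤ p t) (hq : ∀ t, 0 ≤ q t)
    (hpq : ∀ t, q t = 0 → p t = 0) (hsum : ∑ t, p t = ∑ t, q t) : 0 ≤ KL p q := by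
  have hl2 : 0 < Real.log 2 := Real.log_pos (by norm_num)
  have key : ∀ t, (p t - q t) / Real.log 2 ≤ p t * Real.logb 2 (p t / q t) := by
    intro t
    rw [Real.logb, ← mul_div_assoc]
    gcongr
    rcases (hq t).eq_or_lt with h | h
    · simp [← h, hpq t h.symm]
    rcases (hp t).eq_or_lt with h' | h'
    · simp [← h', h.le]
    have h3 := Real.log_le_sub_one_of_pos (div_pos h h')
    rw [← inv_div, Real.log_inv] at h3
    rw [inv_div] at h3
    have h4 : p t * (q t / p t) = q t := mul_div_cancel₀ _ h'.ne'
    nlinarith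
  have := Finset.sum_le_sum fun t (_ : t ∈ Finset.univ) => key t
  rw [← Finset.sum_div, Finset.sum_sub_distrib, hsum, sub_self, zero_div] at this
  exact this

/-- Codebooks of positive probability only use letters charged by `p`, so their output law is
absolutely continuous with respect to the ideal one; the other codebooks have weight zero. -/
lemma expected_KL_nonneg {m : ℕ} (hm : 0 < m) (p : V → ℝ) (hp : IsPmf p) (W : V → T → ℝ)
    (hW : IsKernel W) :
    0 ≤ ∑ v : Fin m → V, (∏ i, p (v i)) *
        KL (fun t => (m : ℝ)⁻¹ * ∑ k, W (v k) t) (fun t => ∑ a, p a * W a t) := by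
  have hm' : 0 < (m : ℝ) := by exact_mod_cast hm
  refine Finset.sum_nonneg fun v _ => ?_
  by_cases h0 : ∏ i, p (v i) = 0
  · simp [h0]
  have hv : ∀ i, p (v i) ≠ 0 := fun i hi => h0 (Finset.prod_eq_zero (Finset.mem_univ i) hi)
  refine mul_nonneg (Finset.prod_nonneg fun i _ => hp.1 _) (KL_nonneg _ _ ?_ ?_ ?_ ?_)
  · exact fun t => mul_nonneg (by positivity) (Finset.sum_nonneg fun k _ => (hW _).1 t)
  · exact fun t => Finset.sum_nonneg fun a _ => mul_nonneg (hp.1 a) ((hW a).1 t)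
  · intro t ht
    rw [Finset.sum_eq_zero_iff_of_nonneg fun a _ => mul_nonneg (hp.1 a) ((hW a).1 t)] at ht
    have : ∑ k, W (v k) t = 0 := Finset.sum_eq_zero fun k _ =>
      (mul_eq_zero.1 (ht (v k) (Finset.mem_univ _))).resolve_left (hv k)
    simp [this]
  · rw [← Finset.mul_sum, Finset.sum_comm, Finset.sum_comm (s := Finset.univ (α := T))]
    simp only [← Finset.mul_sum, (hW _).2, mul_one, hp.2, Finset.sum_const, Finset.card_univ,
      Fintype.card_fin, nsmul_eq_mul]
    exact inv_mul_cancel₀ hm'.ne'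

end OneShot

/-! ### The single-letter exponent -/

section SingleLetter

set_option linter.unusedSectionVars false

lemma H_eq_sum {Ω α : Type*} [Fintype Ω] [Fintype α] [DecidableEq α] (p : Ω → ℝ) (X : Ω → α) :
    H p X = -∑ ω, p ω * Real.logb 2 (law p X (X ω)) := by
  unfold H ent
  congr 1
  calc ∑ a, law p X a * Real.logb 2 (law p X a)
      = ∑ a, ∑ ω, if X ω = a then p ω * Real.logb 2 (law p X a) else 0 := by
        refine Finset.sum_congr rfl fun a _ => ?_
        conv_lhs => rw [law, Finset.sum_mul]
        refine Finset.sum_congr rfl fun ω _ => ?_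
        simp only [ite_mul, zero_mul, law]
    _ = _ := by
        rw [Finset.sum_comm]
        simp

variable (PU : U → ℝ) (PU1 : U → U1 → ℝ) (PU2 : U → U2 → ℝ) (PS : AS → ℝ)
  (PY : U → U1 → U2 → AS → AY → ℝ)

/-- The single-letter likelihood ratio `P_{YS|U U1 U2} / P_{YS|U U1}`. -/
def ratio (ω : O5Y U U1 U2 AS AY) : ℝ :=
  PY ω.u ω.u1 ω.u2 ω.s ω.y * PS ω.s / ∑ a, PU2 ω.u a * (PY ω.u ω.u1 a ω.s ω.y * PS ω.s)

lemma slJointY_nonneg (hPU : IsPmf PU) (hPU1 : IsKernel PU1) (hPU2 : IsKernel PU2) (hPS : IsPmf PS)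
    (hPY : ∀ u u1 u2 s, IsPmf (PY u u1 u2 s)) (ω : O5Y U U1 U2 AS AY) :
    0 ≤ slJointY PU PU1 PU2 PS PY ω :=
  mul_nonneg (mul_nonneg (mul_nonneg (mul_nonneg (hPS.1 _) (hPU.1 _)) ((hPU1 _).1 _))
    ((hPU2 _).1 _)) ((hPY _ _ _ _).1 _)

lemma slJointY_sum (hPU : IsPmf PU) (hPU1 : IsKernel PU1) (hPU2 : IsKernel PU2) (hPS : IsPmf PS)
    (hPY : ∀ u u1 u2 s, IsPmf (PY u u1 u2 s)) : ∑ ω, slJointY PU PU1 PU2 PS PY ω = 1 := by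
  simp only [slJointY, O5Y.u, O5Y.u1, O5Y.u2, O5Y.s, O5Y.y, Fintype.sum_prod_type,
    ← Finset.mul_sum, (hPY _ _ _ _).2, mul_one]
  simp only [mul_assoc, ← Finset.sum_mul, hPS.2, one_mul, ← Finset.mul_sum, (hPU2 _).2, mul_one,
    (hPU1 _).2, hPU.2]

/-- On the support of the joint law, the four marginals entering the conditional mutual information
combine to the likelihood ratio. -/
lemma ratio_pos_and_log (hPU : IsPmf PU) (hPU1 : IsKernel PU1) (hPU2 : IsKernel PU2)
    (hPS : IsPmf PS) (hPY : ∀ u u1 u2 s, IsPmf (PY u u1 u2 s)) (ω : O5Y U U1 U2 AS AY)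
    (hω : slJointY PU PU1 PU2 PS PY ω ≠ 0) :
    0 < ratio PU2 PS PY ω ∧ Real.logb 2 (ratio PU2 PS PY ω) =
      Real.logb 2 (law (slJointY PU PU1 PU2 PS PY) (fun ω => (ω.u, ω.u1, ω.s)) (ω.u, ω.u1, ω.s))
      - Real.logb 2 (law (slJointY PU PU1 PU2 PS PY) (fun ω => (ω.u2, ω.u, ω.u1, ω.s))
          (ω.u2, ω.u, ω.u1, ω.s))
      + Real.logb 2 (law (slJointY PU PU1 PU2 PS PY) (fun ω => (ω.u2, ω.y, ω.u, ω.u1, ω.s))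
          (ω.u2, ω.y, ω.u, ω.u1, ω.s))
      - Real.logb 2 (law (slJointY PU PU1 PU2 PS PY) (fun ω => (ω.y, ω.u, ω.u1, ω.s))
          (ω.y, ω.u, ω.u1, ω.s)) := by
  obtain ⟨u, u1, u2, s, y⟩ := ω
  have l1 : law (slJointY PU PU1 PU2 PS PY) (fun ω => (ω.u, ω.u1, ω.s)) (u, u1, s) =
      PS s * PU u * PU1 u u1 := by
    simp only [law, slJointY, O5Y.u, O5Y.u1, O5Y.u2, O5Y.s, O5Y.y, Fintype.sum_prod_type,
      Prod.mk.injEq, ite_and, Finset.sum_ite_irrel, Finset.sum_const_zero, Finset.sum_ite_eq',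
      Finset.mem_univ, if_true, ← Finset.mul_sum, (hPY _ _ _ _).2, (hPU2 _).2, mul_one]
  have l2 : law (slJointY PU PU1 PU2 PS PY) (fun ω => (ω.u2, ω.u, ω.u1, ω.s)) (u2, u, u1, s) =
      PS s * PU u * PU1 u u1 * PU2 u u2 := by
    simp only [law, slJointY, O5Y.u, O5Y.u1, O5Y.u2, O5Y.s, O5Y.y, Fintype.sum_prod_type,
      Prod.mk.injEq, ite_and, Finset.sum_ite_irrel, Finset.sum_const_zero, Finset.sum_ite_eq',
      Finset.mem_univ, if_true, ← Finset.mul_sum, (hPY _ _ _ _).2, mul_one]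
  have l3 : law (slJointY PU PU1 PU2 PS PY) (fun ω => (ω.u2, ω.y, ω.u, ω.u1, ω.s))
      (u2, y, u, u1, s) = PS s * PU u * PU1 u u1 * PU2 u u2 * PY u u1 u2 s y := by
    simp only [law, slJointY, O5Y.u, O5Y.u1, O5Y.u2, O5Y.s, O5Y.y, Fintype.sum_prod_type,
      Prod.mk.injEq, ite_and, Finset.sum_ite_irrel, Finset.sum_const_zero, Finset.sum_ite_eq',
      Finset.mem_univ, if_true]
  have l4 : law (slJointY PU PU1 PU2 PS PY) (fun ω => (ω.y, ω.u, ω.u1, ω.s)) (y, u, u1, s) =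
      PS s * PU u * PU1 u u1 * ∑ a, PU2 u a * PY u u1 a s y := by
    simp only [law, slJointY, O5Y.u, O5Y.u1, O5Y.u2, O5Y.s, O5Y.y, Fintype.sum_prod_type,
      Prod.mk.injEq, ite_and, Finset.sum_ite_irrel, Finset.sum_const_zero, Finset.sum_ite_eq',
      Finset.mem_univ, if_true, Finset.mul_sum, mul_assoc]
  have hs : 0 ≤ PS s := hPS.1 s
  have hu : 0 ≤ PU u := hPU.1 u
  have hu1 : 0 ≤ PU1 u u1 := (hPU1 u).1 u1
  have hu2 : 0 ≤ PU2 u u2 := (hPU2 u).1 u2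
  have hy : 0 ≤ PY u u1 u2 s y := (hPY u u1 u2 s).1 y
  simp only [slJointY, O5Y.u, O5Y.u1, O5Y.u2, O5Y.s, O5Y.y, ne_eq, mul_eq_zero, not_or] at hω
  obtain ⟨⟨⟨⟨h1, h2⟩, h3⟩, h4⟩, h5⟩ := hω
  have hs := lt_of_le_of_ne hs (Ne.symm h1)
  have hu := lt_of_le_of_ne hu (Ne.symm h2)
  have hu1 := lt_of_le_of_ne hu1 (Ne.symm h3)
  have hu2 := lt_of_le_of_ne hu2 (Ne.symm h4)
  have hy := lt_of_le_of_ne hy (Ne.symm h5)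
  have hq : 0 < ∑ a, PU2 u a * PY u u1 a s y :=
    lt_of_lt_of_le (mul_pos hu2 hy) (Finset.single_le_sum
      (f := fun a => PU2 u a * PY u u1 a s y)
      (fun a _ => mul_nonneg ((hPU2 u).1 a) ((hPY u u1 a s).1 y)) (Finset.mem_univ u2))
  have hr : ratio PU2 PS PY (u, u1, u2, s, y) =
      PY u u1 u2 s y / ∑ a, PU2 u a * PY u u1 a s y := by
    simp only [ratio, O5Y.u, O5Y.u1, O5Y.u2, O5Y.s, O5Y.y, ← mul_assoc, ← Finset.sum_mul]
    exact mul_div_mul_right _ _ hs.ne'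
  refine ⟨by rw [hr]; positivity, ?_⟩
  simp only [O5Y.u, O5Y.u1, O5Y.u2, O5Y.s, O5Y.y] at l1 l2 l3 l4 ⊢
  rw [hr, l1, l2, l3, l4, Real.logb_div hy.ne' hq.ne', Real.logb_mul _ hy.ne',
    Real.logb_mul _ hq.ne']
  · ring
  all_goals positivity

lemma cMI_eq_sum (hPU : IsPmf PU) (hPU1 : IsKernel PU1) (hPU2 : IsKernel PU2)
    (hPS : IsPmf PS) (hPY : ∀ u u1 u2 s, IsPmf (PY u u1 u2 s)) :
    cMI (slJointY PU PU1 PU2 PS PY) (fun ω => ω.u2) (fun ω => ω.y)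
        (fun ω => (ω.u, ω.u1, ω.s)) =
      ∑ ω, slJointY PU PU1 PU2 PS PY ω * Real.logb 2 (ratio PU2 PS PY ω) := by
  unfold cMI Hc
  simp only [H_eq_sum]
  simp only [sub_eq_add_neg, neg_add, neg_neg, ← Finset.sum_neg_distrib,
    ← Finset.sum_add_distrib]
  refine Finset.sum_congr rfl fun ω _ => ?_
  by_cases h : slJointY PU PU1 PU2 PS PY ω = 0
  · simp [h]
  · rw [(ratio_pos_and_log PU PU1 PU2 PS PY hPU hPU1 hPU2 hPS hPY ω h).2]
    ring

/-- The derivative at `ρ = 0` of `∑ p * r ^ ρ * 2 ^ (-ρ R)` is `(I - R) log 2 < 0`, where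
`I = ∑ p * logb 2 r`, while the value at `0` is `1`. -/
lemma exists_exponent {Ω : Type*} [Fintype Ω] (p r : Ω → ℝ) (hp : IsPmf p)
    (hr : ∀ ω, p ω ≠ 0 → 0 < r ω) {R : ℝ} (hR : ∑ ω, p ω * Real.logb 2 (r ω) < R) :
    ∃ ρ : ℝ, 0 < ρ ∧ ρ ≤ 1 ∧ (∑ ω, p ω * r ω ^ ρ) * (2 : ℝ) ^ (-(ρ * R)) < 1 := by
  have hl2 : 0 < Real.log 2 := Real.log_pos (by norm_num)
  set B : ℝ → ℝ := fun ρ => ∑ ω, p ω * Real.exp (ρ * (Real.log (r ω) - R * Real.log 2)) with hB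
  have hB0 : B 0 = 1 := by simp [hB, hp.2]
  have hd : HasDerivAt B (∑ ω, p ω * (Real.log (r ω) - R * Real.log 2)) 0 := by
    rw [hB]
    refine HasDerivAt.fun_sum fun ω _ => ?_
    have h1 : HasDerivAt (fun ρ : ℝ => ρ * (Real.log (r ω) - R * Real.log 2))
        (Real.log (r ω) - R * Real.log 2) 0 := by
      simpa using (hasDerivAt_id (0 : ℝ)).mul_const (Real.log (r ω) - R * Real.log 2)
    simpa using h1.exp.const_mul (p ω)
  have hneg : ∑ ω, p ω * (Real.log (r ω) - R * Real.log 2) < 0 := by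
    have e : ∑ ω, p ω * (Real.log (r ω) - R * Real.log 2) =
        (∑ ω, p ω * Real.logb 2 (r ω) - R) * Real.log 2 := by
      simp only [mul_sub, Finset.sum_sub_distrib, ← Finset.sum_mul, hp.2, one_mul, sub_mul]
      congr 1
      rw [Finset.sum_mul]
      refine Finset.sum_congr rfl fun ω _ => ?_
      rw [Real.logb]
      field_simp
    rw [e]
    exact mul_neg_of_neg_of_pos (by linarith) hl2
  have hev : ∀ᶠ ρ in nhdsWithin (0 : ℝ) (Set.Ioi 0), slope B 0 ρ < 0 :=
    (hd.tendsto_slope.mono_left (nhdsWithin_mono _ fun x (hx : 0 < x) => hx.ne')).eventually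
      (gt_mem_nhds hneg)
  have hev2 : ∀ᶠ ρ in nhdsWithin (0 : ℝ) (Set.Ioi 0), ρ ∈ Set.Ioc (0 : ℝ) 1 :=
    Ioc_mem_nhdsGT (by norm_num)
  obtain ⟨ρ, h1, h2, h3⟩ := (hev.and hev2).exists
  refine ⟨ρ, h2, h3, ?_⟩
  have hlt : B ρ < 1 := by
    rw [slope_def_field, sub_zero, hB0, div_neg_iff] at h1
    rcases h1 with h | h
    · linarith [h.2]
    · linarith [h.1]
  refine lt_of_eq_of_lt ?_ hlt
  rw [hB, Finset.sum_mul]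
  refine Finset.sum_congr rfl fun ω _ => ?_
  by_cases h : p ω = 0
  · simp [h]
  rw [Real.rpow_def_of_pos (hr ω h), Real.rpow_def_of_pos (by norm_num : (0:ℝ) < 2), mul_assoc,
    ← Real.exp_add]
  ring_nf

end SingleLetter

/-! ### Block length `n` -/

section Block

set_option linter.unusedSectionVars false

variable (PU : U → ℝ) (PU1 : U → U1 → ℝ) (PU2 : U → U2 → ℝ) (PS : AS → ℝ)
  (PY : U → U1 → U2 → AS → AY → ℝ)

/-- The memoryless channel `P^n_{YS|U U1 U2}(· | u, u1, ·)` from Sender 2's codeword to the output,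
for fixed codewords `u`, `u1`. -/
def blockW {n : ℕ} (u : Fin n → U) (u1 : Fin n → U1) (v : Fin n → U2)
    (ys : (Fin n → AY) × (Fin n → AS)) : ℝ :=
  ∏ i, PY (u i) (u1 i) (v i) (ys.2 i) (ys.1 i) * PS (ys.2 i)

lemma isPmf_prod {X : Type*} [Fintype X] {n : ℕ} (p : Fin n → X → ℝ) (hp : ∀ i, IsPmf (p i)) :
    IsPmf (fun v : Fin n → X => ∏ i, p i (v i)) :=
  ⟨fun _ => Finset.prod_nonneg fun i _ => (hp i).1 _, sum_prod_eq_one p fun i => (hp i).2⟩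

lemma sum_prod_pair {n : ℕ} (f : Fin n → AY → AS → ℝ) :
    ∑ ys : (Fin n → AY) × (Fin n → AS), ∏ i, f i (ys.1 i) (ys.2 i) =
      ∏ i, ∑ s, ∑ y, f i y s := by
  rw [Fintype.sum_prod_type, Finset.sum_comm, Fintype.prod_sum]
  refine Finset.sum_congr rfl fun s _ => ?_
  rw [Fintype.prod_sum]

lemma blockW_isKernel (hPS : IsPmf PS) (hPY : ∀ u u1 u2 s, IsPmf (PY u u1 u2 s)) {n : ℕ}
    (u : Fin n → U) (u1 : Fin n → U1) : IsKernel (blockW PS PY u u1) := by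
  refine fun v => ⟨fun ys => Finset.prod_nonneg fun i _ => mul_nonneg ((hPY _ _ _ _).1 _) (hPS.1 _), ?_⟩
  unfold blockW
  rw [sum_prod_pair (fun i y s => PY (u i) (u1 i) (v i) s y * PS s)]
  simp [← Finset.sum_mul, (hPY _ _ _ _).2, hPS.2]

/-- The `ρ`-th moment of the block likelihood ratio tensorizes. -/
lemma block_moment (hPU2 : IsKernel PU2) (hPS : IsPmf PS)
    (hPY : ∀ u u1 u2 s, IsPmf (PY u u1 u2 s)) (n : ℕ) (ρ : ℝ) :
    ∑ u : Fin n → U, (∏ i, PU (u i)) * ∑ u1 : Fin n → U1, (∏ i, PU1 (u i) (u1 i)) *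
      ∑ v : Fin n → U2, (∏ i, PU2 (u i) (v i)) * ∑ ys, blockW PS PY u u1 v ys *
        (blockW PS PY u u1 v ys /
          ∑ b : Fin n → U2, (∏ i, PU2 (u i) (b i)) * blockW PS PY u u1 b ys) ^ ρ =
    (∑ ω, slJointY PU PU1 PU2 PS PY ω * ratio PU2 PS PY ω ^ ρ) ^ n := by
  have h1 : ∀ (u : Fin n → U) (u1 : Fin n → U1) (v : Fin n → U2),
      ∑ ys, blockW PS PY u u1 v ys * (blockW PS PY u u1 v ys /
          ∑ b : Fin n → U2, (∏ i, PU2 (u i) (b i)) * blockW PS PY u u1 b ys) ^ ρ =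
      ∏ i, ∑ s, ∑ y, PY (u i) (u1 i) (v i) s y * PS s *
        ratio PU2 PS PY (u i, u1 i, v i, s, y) ^ ρ := by
    intro u u1 v
    rw [← sum_prod_pair]
    refine Finset.sum_congr rfl fun ys _ => ?_
    unfold blockW
    rw [sum_prod_mul_prod (fun i a => PU2 (u i) a)
      (fun i a => PY (u i) (u1 i) a (ys.2 i) (ys.1 i) * PS (ys.2 i)), ← Finset.prod_div_distrib,
      ← Real.finsetProd_rpow, ← Finset.prod_mul_distrib]
    · rfl
    · intro i _
      exact div_nonneg (mul_nonneg ((hPY _ _ _ _).1 _) (hPS.1 _)) (Finset.sum_nonneg fun a _ =>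
        mul_nonneg ((hPU2 _).1 _) (mul_nonneg ((hPY _ _ _ _).1 _) (hPS.1 _)))
  simp only [h1]
  have h2 : ∀ (u : Fin n → U) (u1 : Fin n → U1),
      ∑ v : Fin n → U2, (∏ i, PU2 (u i) (v i)) * ∏ i, ∑ s, ∑ y,
        PY (u i) (u1 i) (v i) s y * PS s * ratio PU2 PS PY (u i, u1 i, v i, s, y) ^ ρ =
      ∏ i, ∑ u2, PU2 (u i) u2 * ∑ s, ∑ y,
        PY (u i) (u1 i) u2 s y * PS s * ratio PU2 PS PY (u i, u1 i, u2, s, y) ^ ρ :=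
    fun u u1 => sum_prod_mul_prod (fun i a => PU2 (u i) a) (fun i a => ∑ s, ∑ y,
        PY (u i) (u1 i) a s y * PS s * ratio PU2 PS PY (u i, u1 i, a, s, y) ^ ρ)
  simp only [h2]
  have h3 : ∀ u : Fin n → U, ∑ u1 : Fin n → U1, (∏ i, PU1 (u i) (u1 i)) *
      ∏ i, ∑ u2, PU2 (u i) u2 * ∑ s, ∑ y,
        PY (u i) (u1 i) u2 s y * PS s * ratio PU2 PS PY (u i, u1 i, u2, s, y) ^ ρ =
      ∏ i, ∑ b, PU1 (u i) b * ∑ u2, PU2 (u i) u2 * ∑ s, ∑ y,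
        PY (u i) b u2 s y * PS s * ratio PU2 PS PY (u i, b, u2, s, y) ^ ρ :=
    fun u => sum_prod_mul_prod (fun i b => PU1 (u i) b) (fun i b => ∑ u2, PU2 (u i) u2 *
        ∑ s, ∑ y, PY (u i) b u2 s y * PS s * ratio PU2 PS PY (u i, b, u2, s, y) ^ ρ)
  simp only [h3]
  rw [sum_prod_mul_prod (fun _ a => PU a) (fun _ a => ∑ b, PU1 a b * ∑ u2, PU2 a u2 *
        ∑ s, ∑ y, PY a b u2 s y * PS s * ratio PU2 PS PY (a, b, u2, s, y) ^ ρ)]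
  rw [Finset.prod_const, Finset.card_univ, Fintype.card_fin]
  congr 1
  simp only [Fintype.sum_prod_type, Finset.mul_sum]
  refine Finset.sum_congr rfl fun _ _ => Finset.sum_congr rfl fun _ _ =>
    Finset.sum_congr rfl fun _ _ => Finset.sum_congr rfl fun _ _ =>
    Finset.sum_congr rfl fun _ _ => ?_
  simp only [slJointY, O5Y.u, O5Y.u1, O5Y.u2, O5Y.s, O5Y.y]
  ring

/-- A functional of the codewords with indices `(l, l1)` and of the `l`-th codebook of Sender 2 only
sees the marginal law of those codewords. -/
lemma codebook_marginal (hPU : IsPmf PU) (hPU1 : IsKernel PU1) (hPU2 : IsKernel PU2)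
    {m0 m1 m2 n : ℕ} (l : Fin m0) (l1 : Fin m1)
    (G : (Fin n → U) → (Fin n → U1) → (Fin m2 → Fin n → U2) → ℝ) :
    ∑ c : Fin m0 → Fin n → U, ∑ c1 : Fin m0 → Fin m1 → Fin n → U1,
      ∑ c2 : Fin m0 → Fin m2 → Fin n → U2,
        cbProb PU PU1 PU2 c c1 c2 * G (c l) (c1 l l1) (c2 l) =
    ∑ u : Fin n → U, (∏ i, PU (u i)) * ∑ u1 : Fin n → U1, (∏ i, PU1 (u i) (u1 i)) *
      ∑ v : Fin m2 → Fin n → U2, (∏ k, ∏ i, PU2 (u i) (v k i)) * G u u1 v := by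
  simp only [cbProb, mul_assoc, ← Finset.mul_sum]
  have s1 : ∀ u : Fin n → U, ∑ u1 : Fin n → U1, ∏ i, PU1 (u i) (u1 i) = 1 := fun u =>
    sum_prod_eq_one (fun i => PU1 (u i)) fun i => (hPU1 _).2
  have s2 : ∀ u : Fin n → U, ∑ u2 : Fin n → U2, ∏ i, PU2 (u i) (u2 i) = 1 := fun u =>
    sum_prod_eq_one (fun i => PU2 (u i)) fun i => (hPU2 _).2
  have e2 : ∀ (c : Fin m0 → Fin n → U) (c1 : Fin m0 → Fin m1 → Fin n → U1),
      ∑ c2 : Fin m0 → Fin m2 → Fin n → U2,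
        (∏ l, ∏ l2, ∏ i, PU2 (c l i) (c2 l l2 i)) * G (c l) (c1 l l1) (c2 l) =
      ∑ v : Fin m2 → Fin n → U2, (∏ k, ∏ i, PU2 (c l i) (v k i)) * G (c l) (c1 l l1) v :=
    fun c c1 => sum_prod_mul_apply
      (fun l (v : Fin m2 → Fin n → U2) => ∏ l2, ∏ i, PU2 (c l i) (v l2 i))
      (fun l => sum_prod_eq_one (fun _ (x : Fin n → U2) => ∏ i, PU2 (c l i) (x i))
        fun _ => s2 (c l)) l (G (c l) (c1 l l1))
  simp only [e2]
  have e1 : ∀ (c : Fin m0 → Fin n → U) (F : (Fin n → U1) → ℝ),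
      ∑ c1 : Fin m0 → Fin m1 → Fin n → U1,
        (∏ l, ∏ l1, ∏ i, PU1 (c l i) (c1 l l1 i)) * F (c1 l l1) =
      ∑ u1 : Fin n → U1, (∏ i, PU1 (c l i) (u1 i)) * F u1 := by
    intro c F
    rw [sum_prod_mul_apply
      (fun l (v : Fin m1 → Fin n → U1) => ∏ l2, ∏ i, PU1 (c l i) (v l2 i))
      (fun l => sum_prod_eq_one (fun _ (x : Fin n → U1) => ∏ i, PU1 (c l i) (x i))
        fun _ => s1 (c l)) l (fun v => F (v l1))]
    exact sum_prod_mul_apply (fun _ (x : Fin n → U1) => ∏ i, PU1 (c l i) (x i))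
      (fun _ => s1 (c l)) l1 F
  have e1' := fun c => e1 c (fun u1 => ∑ v : Fin m2 → Fin n → U2,
    (∏ k, ∏ i, PU2 (c l i) (v k i)) * G (c l) u1 v)
  simp only [e1']
  exact sum_prod_mul_apply (fun _ (x : Fin n → U) => ∏ i, PU (x i))
    (fun _ => sum_prod_eq_one (fun _ => PU) fun _ => hPU.2) l
    (fun u => ∑ u1 : Fin n → U1, (∏ i, PU1 (u i) (u1 i)) *
      ∑ v : Fin m2 → Fin n → U2, (∏ k, ∏ i, PU2 (u i) (v k i)) * G u u1 v)

/-- By symmetry of the random codebook in `(l, l1)`, the average over the indices may be replaced by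
a single pair of codewords together with an independent codebook of Sender 2. -/
lemma expected_average_eq (hPU : IsPmf PU) (hPU1 : IsKernel PU1) (hPU2 : IsKernel PU2)
    {m0 m1 m2 n : ℕ} (hm0 : 0 < m0) (hm1 : 0 < m1) :
    ∑ c : Fin m0 → Fin n → U, ∑ c1 : Fin m0 → Fin m1 → Fin n → U1,
      ∑ c2 : Fin m0 → Fin m2 → Fin n → U2,
        cbProb PU PU1 PU2 c c1 c2 * (m0 * m1 : ℝ)⁻¹ * ∑ l, ∑ l1,
          KL (inducedYS PS PY c c1 c2 l l1) (idealYS PU2 PS PY (c l) (c1 l l1)) =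
    ∑ u : Fin n → U, (∏ i, PU (u i)) * ∑ u1 : Fin n → U1, (∏ i, PU1 (u i) (u1 i)) *
      ∑ v : Fin m2 → Fin n → U2, (∏ k, ∏ i, PU2 (u i) (v k i)) *
        KL (fun ys => (m2 : ℝ)⁻¹ * ∑ k, blockW PS PY u u1 (v k) ys)
          (fun ys => ∑ b : Fin n → U2, (∏ i, PU2 (u i) (b i)) * blockW PS PY u u1 b ys) := by
  set E := ∑ u : Fin n → U, (∏ i, PU (u i)) * ∑ u1 : Fin n → U1, (∏ i, PU1 (u i) (u1 i)) *
      ∑ v : Fin m2 → Fin n → U2, (∏ k, ∏ i, PU2 (u i) (v k i)) *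
        KL (fun ys => (m2 : ℝ)⁻¹ * ∑ k, blockW PS PY u u1 (v k) ys)
          (fun ys => ∑ b : Fin n → U2, (∏ i, PU2 (u i) (b i)) * blockW PS PY u u1 b ys) with hE
  have key : ∀ (l : Fin m0) (l1 : Fin m1), ∑ c : Fin m0 → Fin n → U,
      ∑ c1 : Fin m0 → Fin m1 → Fin n → U1, ∑ c2 : Fin m0 → Fin m2 → Fin n → U2,
        cbProb PU PU1 PU2 c c1 c2 *
          KL (inducedYS PS PY c c1 c2 l l1) (idealYS PU2 PS PY (c l) (c1 l l1)) = E :=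
    fun l l1 => codebook_marginal PU PU1 PU2 hPU hPU1 hPU2 l l1 (fun u u1 v =>
      KL (fun ys => (m2 : ℝ)⁻¹ * ∑ k, blockW PS PY u u1 (v k) ys)
          (fun ys => ∑ b : Fin n → U2, (∏ i, PU2 (u i) (b i)) * blockW PS PY u u1 b ys))
  have hm0' : (m0 : ℝ) ≠ 0 := by exact_mod_cast hm0.ne'
  have hm1' : (m1 : ℝ) ≠ 0 := by exact_mod_cast hm1.ne'
  calc _ = (m0 * m1 : ℝ)⁻¹ * ∑ l : Fin m0, ∑ l1 : Fin m1, ∑ c : Fin m0 → Fin n → U,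
      ∑ c1 : Fin m0 → Fin m1 → Fin n → U1, ∑ c2 : Fin m0 → Fin m2 → Fin n → U2,
        cbProb PU PU1 PU2 c c1 c2 *
          KL (inducedYS PS PY c c1 c2 l l1) (idealYS PU2 PS PY (c l) (c1 l l1)) := by
        simp only [Finset.mul_sum, ← Fintype.sum_prod_type']
        refine Fintype.sum_equiv ⟨fun x => (x.2.2.2.1, x.2.2.2.2, x.1, x.2.1, x.2.2.1),
          fun x => (x.2.2.1, x.2.2.2.1, x.2.2.2.2, x.1, x.2.1), fun _ => rfl, fun _ => rfl⟩ _ _ ?_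
        intro x
        simp only [Equiv.coe_fn_mk]
        ring
    _ = E := by
        simp only [key, Finset.sum_const, Finset.card_univ, Fintype.card_fin, nsmul_eq_mul]
        field_simp

end Block

/-- **Lemma 3 (conditional resolvability when the eavesdropper knows Sender 1's
codeword).** If `R2 > I(U2;Y|U,U1,S)`, then the expectation over the random codebooks of
the average (over `(l,l1)`) KL divergence between the induced and the ideal conditional
output distributions converges to `0` as `n → ∞`. -/
theorem resolvability_conditional (PU : U → ℝ) (PU1 : U → U1 → ℝ) (PU2 : U → U2 → ℝ)
    (PS : AS → ℝ) (PY : U → U1 → U2 → AS → AY → ℝ)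
    (hPU : IsPmf PU) (hPU1 : IsKernel PU1) (hPU2 : IsKernel PU2) (hPS : IsPmf PS)
    (hPY : ∀ u u1 u2 s, IsPmf (PY u u1 u2 s))
    (R0 R1 R2 : ℝ) (hR0 : 0 < R0) (hR1 : 0 < R1) (hR2 : 0 < R2)
    (h2 : cMI (slJointY PU PU1 PU2 PS PY) (fun ω => ω.u2) (fun ω => ω.y)
        (fun ω => (ω.u, ω.u1, ω.s)) < R2) :
    Filter.Tendsto (fun n : ℕ =>
      ∑ c : Fin ⌈(2 : ℝ) ^ ((n : ℝ) * R0)⌉₊ → Fin n → U,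
      ∑ c1 : Fin ⌈(2 : ℝ) ^ ((n : ℝ) * R0)⌉₊ → Fin ⌈(2 : ℝ) ^ ((n : ℝ) * R1)⌉₊ → Fin n → U1,
      ∑ c2 : Fin ⌈(2 : ℝ) ^ ((n : ℝ) * R0)⌉₊ → Fin ⌈(2 : ℝ) ^ ((n : ℝ) * R2)⌉₊ → Fin n → U2,
        cbProb PU PU1 PU2 c c1 c2 *
          ((⌈(2 : ℝ) ^ ((n : ℝ) * R0)⌉₊ * ⌈(2 : ℝ) ^ ((n : ℝ) * R1)⌉₊ : ℝ))⁻¹ *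
            ∑ l, ∑ l1,
              KL (inducedYS PS PY c c1 c2 l l1) (idealYS PU2 PS PY (c l) (c1 l l1)))
      Filter.atTop (nhds 0) := by
  have hpmf : IsPmf (slJointY PU PU1 PU2 PS PY) :=
    ⟨slJointY_nonneg PU PU1 PU2 PS PY hPU hPU1 hPU2 hPS hPY,
      slJointY_sum PU PU1 PU2 PS PY hPU hPU1 hPU2 hPS hPY⟩
  rw [cMI_eq_sum PU PU1 PU2 PS PY hPU hPU1 hPU2 hPS hPY] at h2
  obtain ⟨ρ, hρ, hρ1, hlt⟩ := exists_exponent _ (ratio PU2 PS PY) hpmf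
    (fun ω h => (ratio_pos_and_log PU PU1 PU2 PS PY hPU hPU1 hPU2 hPS hPY ω h).1) h2
  set A := ∑ ω, slJointY PU PU1 PU2 PS PY ω * ratio PU2 PS PY ω ^ ρ with hA
  have hr0 : ∀ ω, 0 ≤ ratio PU2 PS PY ω := fun ω =>
    div_nonneg (mul_nonneg ((hPY _ _ _ _).1 _) (hPS.1 _)) (Finset.sum_nonneg fun a _ =>
      mul_nonneg ((hPU2 _).1 _) (mul_nonneg ((hPY _ _ _ _).1 _) (hPS.1 _)))
  have hA0 : 0 ≤ A := Finset.sum_nonneg fun ω _ =>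
    mul_nonneg (hpmf.1 ω) (Real.rpow_nonneg (hr0 ω) _)
  have hl2 : 0 < Real.log 2 := Real.log_pos (by norm_num)
  have hceil : ∀ (n : ℕ) (R : ℝ), 0 < ⌈(2 : ℝ) ^ ((n : ℝ) * R)⌉₊ := fun n R =>
    Nat.ceil_pos.2 (by positivity)
  have hlim : Filter.Tendsto (fun n : ℕ => (ρ * Real.log 2)⁻¹ * (A * (2 : ℝ) ^ (-(ρ * R2))) ^ n)
      Filter.atTop (nhds 0) := by
    simpa using (tendsto_pow_atTop_nhds_zero_of_lt_one (by positivity) hlt).const_mul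
      (ρ * Real.log 2)⁻¹
  refine squeeze_zero (fun n => ?_) (fun n => ?_) hlim
  · rw [expected_average_eq PU PU1 PU2 PS PY hPU hPU1 hPU2 (hceil n R0) (hceil n R1)]
    refine Finset.sum_nonneg fun u _ => mul_nonneg (Finset.prod_nonneg fun i _ => hPU.1 _)
      (Finset.sum_nonneg fun u1 _ => mul_nonneg (Finset.prod_nonneg fun i _ => (hPU1 _).1 _) ?_)
    exact expected_KL_nonneg (hceil n R2) _ (isPmf_prod (fun i => PU2 (u i)) fun i => hPU2 _) _
      (blockW_isKernel PS PY hPS hPY u u1)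
  · rw [expected_average_eq PU PU1 PU2 PS PY hPU hPU1 hPU2 (hceil n R0) (hceil n R1)]
    set m := ⌈(2 : ℝ) ^ ((n : ℝ) * R2)⌉₊ with hm
    have hmpos : 0 < m := hceil n R2
    have hmpow : (m : ℝ) ^ (-ρ) ≤ ((2 : ℝ) ^ (-(ρ * R2))) ^ n := by
      have h1 : (2 : ℝ) ^ ((n : ℝ) * R2) ≤ m := Nat.le_ceil _
      refine (Real.rpow_le_rpow_of_nonpos (by positivity) h1 (by linarith)).trans (le_of_eq ?_)
      rw [← Real.rpow_mul (by norm_num), ← Real.rpow_natCast, ← Real.rpow_mul (by norm_num)]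
      congr 1
      ring
    calc _ ≤ ∑ u : Fin n → U, (∏ i, PU (u i)) * ∑ u1 : Fin n → U1, (∏ i, PU1 (u i) (u1 i)) *
          ((ρ * Real.log 2)⁻¹ * (m : ℝ) ^ (-ρ) *
            ∑ v : Fin n → U2, (∏ i, PU2 (u i) (v i)) * ∑ ys, blockW PS PY u u1 v ys *
              (blockW PS PY u u1 v ys /
                ∑ b : Fin n → U2, (∏ i, PU2 (u i) (b i)) * blockW PS PY u u1 b ys) ^ ρ) := by
          refine Finset.sum_le_sum fun u _ => mul_le_mul_of_nonneg_left
            (Finset.sum_le_sum fun u1 _ => mul_le_mul_of_nonneg_left ?_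
              (Finset.prod_nonneg fun i _ => (hPU1 _).1 _))
            (Finset.prod_nonneg fun i _ => hPU.1 _)
          exact expected_KL_le hmpos _ (isPmf_prod (fun i => PU2 (u i)) fun i => hPU2 _) _
            (blockW_isKernel PS PY hPS hPY u u1) hρ hρ1
      _ = (ρ * Real.log 2)⁻¹ * (m : ℝ) ^ (-ρ) * A ^ n := by
          rw [hA, ← block_moment PU PU1 PU2 PS PY hPU2 hPS hPY n ρ, Finset.mul_sum]
          refine Finset.sum_congr rfl fun u _ => ?_
          rw [mul_left_comm]
          congr 1
          rw [Finset.mul_sum]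
          exact Finset.sum_congr rfl fun u1 _ => by ring
      _ ≤ (ρ * Real.log 2)⁻¹ * ((2 : ℝ) ^ (-(ρ * R2))) ^ n * A ^ n := by gcongr
      _ = _ := by
          rw [mul_pow]
          ring

end Paper
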